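/- arXiv:1805.09114 — 2 statements merged into one kernel-verified Lean document; each statement's English description precedes it below -/
import Mathlib

section
/- (Vanishing of FGW: necessity.) Let (Ω_f, d) be a metric space, q ≥ 1 and α ∈ (0,1). Let h ∈ Σ_n, g ∈ Σ_m, features a₁,…,a_n ∈ Ω_f and b₁,…,b_m ∈ Ω_f, and symmetric matrices C₁ ∈ ℝ^{n×n}, C₂ ∈ ℝ^{m×m} that are distance matrices (entries nonnegative, zero diagonal, satisfying the triangle inequality C(i,k) ≤ C(i,l) + C(l,k)). Assume the points are distinct in the product sense: (C₁(i,·), a_i) ≠ (C₁(j,·), a_j) for i ≠ j, and similarly for the second space. Set M_{ij} = d(a_i, b_j). If FGW_{q,α} = min_{π ∈ Π(h,g)} E_q(M,C₁,C₂,π) = 0, then n = m and there exists a bijection σ : {1,…,n} → {1,…,n} such that h_i = g_{σ(i)} for all i, a_i = b_{σ(i)} for all i, and C₁(i,k) = C₂(σ(i),σ(k)) for all i,k. -/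
open Finset

/-- `h` is a positive histogram (element of the open simplex Σₙ). -/
def IsSimplex {n : ℕ} (h : Fin n → ℝ) : Prop :=
  (∀ i, 0 < h i) ∧ ∑ i, h i = 1

/-- The set `Π(h,g)` of admissible couplings between histograms `h` and `g`. -/
def Couplings {n m : ℕ} (h : Fin n → ℝ) (g : Fin m → ℝ) :
    Set (Matrix (Fin n) (Fin m) ℝ) :=
  {π | (∀ i j, 0 ≤ π i j) ∧ (∀ i, ∑ j, π i j = h i) ∧ (∀ j, ∑ i, π i j = g j)}

/-- Wasserstein loss `H_q(M, π) = Σ_{i,j} M_{ij}^q π_{ij}`. -/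
noncomputable def Hloss {n m : ℕ} (q : ℝ) (M π : Matrix (Fin n) (Fin m) ℝ) : ℝ :=
  ∑ i, ∑ j, M i j ^ q * π i j

/-- Gromov–Wasserstein loss `J_q(C₁, C₂, π) = Σ_{i,j,k,l} |C₁(i,k)-C₂(j,l)|^q π_{ij} π_{kl}`. -/
noncomputable def Jloss {n m : ℕ} (q : ℝ) (C1 : Matrix (Fin n) (Fin n) ℝ)
    (C2 : Matrix (Fin m) (Fin m) ℝ) (π : Matrix (Fin n) (Fin m) ℝ) : ℝ :=
  ∑ i, ∑ j, ∑ k, ∑ l, |C1 i k - C2 j l| ^ q * π i j * π k l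

/-- FGW loss `E_q = (1-α) H_q + α J_q`. -/
noncomputable def Eloss {n m : ℕ} (q α : ℝ) (M : Matrix (Fin n) (Fin m) ℝ)
    (C1 : Matrix (Fin n) (Fin n) ℝ) (C2 : Matrix (Fin m) (Fin m) ℝ)
    (π : Matrix (Fin n) (Fin m) ℝ) : ℝ :=
  (1 - α) * Hloss q M π + α * Jloss q C1 C2 π

/-!
The FGW loss is continuous on the compact set of couplings, so a vanishing infimum is attained by
some coupling `π`. All its terms being nonnegative, the support of `π` pairs only points with equal
features, and any two of its pairs carry equal structure entries. Positivity of the weights makes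
this support total on both sides. Hence two points paired with a common partner have the same
feature and the same row of structure entries, so they coincide: the support is the graph of a
bijection, and the marginal constraints then identify the weights.
-/

section Relations

open Function Relator

variable {ι κ Ω S : Type*} {C₁ : Matrix ι ι S} {C₂ : Matrix κ κ S} {a : ι → Ω} {b : κ → Ω}
  {R : ι → κ → Prop}

lemma exists_equiv_of_biTotal_of_biUnique (ht : BiTotal R) (hu : BiUnique R) :
    ∃ σ : ι ≃ κ, ∀ i j, R i j ↔ σ i = j := by
  choose f hf using ht.1
  choose f' hf' using ht.2
  refine ⟨⟨f, f', fun i ↦ hu.1 (hf' (f i)) (hf i), fun j ↦ hu.2 (hf (f' j)) (hf' j)⟩, fun i j ↦ ?_⟩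
  exact ⟨hu.2 (hf i), fun h ↦ h ▸ hf i⟩

/-- A relation between the points of two structured data `(C₁, a)` and `(C₂, b)` preserves
structure if related points have equal features and any two related pairs have equal structure
entries. It plays the role of an isomorphism before the relation is known to be a bijection. -/
structure PreservesStructure (C₁ : Matrix ι ι S) (C₂ : Matrix κ κ S) (a : ι → Ω) (b : κ → Ω)
    (R : ι → κ → Prop) : Prop where
  feature_eq : ∀ {i j}, R i j → a i = b j
  structure_eq : ∀ {i j k l}, R i j → R k l → C₁ i k = C₂ j l

namespace PreservesStructure

lemma flip (hR : PreservesStructure C₁ C₂ a b R) : PreservesStructure C₂ C₁ b a (flip R) where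
  feature_eq hij := (hR.feature_eq hij).symm
  structure_eq hij hkl := (hR.structure_eq hij hkl).symm

lemma leftUnique (hR : PreservesStructure C₁ C₂ a b R) (ht : LeftTotal R)
    (hinj : Injective fun i ↦ (C₁ i, a i)) : LeftUnique R := by
  intro i i' j hij hi'j
  have hrow : C₁ i = C₁ i' := funext fun k ↦
    let ⟨_, hkl⟩ := ht k
    (hR.structure_eq hij hkl).trans (hR.structure_eq hi'j hkl).symm
  exact hinj (Prod.ext hrow ((hR.feature_eq hij).trans (hR.feature_eq hi'j).symm))

lemma biUnique (hR : PreservesStructure C₁ C₂ a b R) (ht : BiTotal R)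
    (hinj₁ : Injective fun i ↦ (C₁ i, a i)) (hinj₂ : Injective fun j ↦ (C₂ j, b j)) :
    BiUnique R :=
  ⟨hR.leftUnique ht.1 hinj₁, (hR.flip.leftUnique ht.2 hinj₂).flip⟩

end PreservesStructure

lemma injective_prodMk_of_forall_ne {τ : Type*} {C : Matrix ι τ S}
    (hne : ∀ i j, i ≠ j → ¬((∀ k, C i k = C j k) ∧ a i = a j)) :
    Injective fun i ↦ (C i, a i) := by
  intro i j hij
  obtain ⟨hrow, hfeature⟩ := Prod.mk.inj hij
  exact not_ne_iff.1 fun hne' ↦ hne i j hne' ⟨congrFun hrow, hfeature⟩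

end Relations

section Couplings

variable {n m : ℕ} {h : Fin n → ℝ} {g : Fin m → ℝ} {π : Matrix (Fin n) (Fin m) ℝ}

lemma IsSimplex.mem_stdSimplex (hh : IsSimplex h) : h ∈ stdSimplex ℝ (Fin n) :=
  ⟨fun i ↦ (hh.1 i).le, hh.2⟩

lemma vecMulVec_mem_couplings (hh : h ∈ stdSimplex ℝ (Fin n)) (hg : g ∈ stdSimplex ℝ (Fin m)) :
    Matrix.vecMulVec h g ∈ Couplings h g := by
  refine ⟨fun i j ↦ mul_nonneg (hh.1 i) (hg.1 j), fun i ↦ ?_, fun j ↦ ?_⟩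
  · simp only [Matrix.vecMulVec_apply, ← mul_sum, hg.2, mul_one]
  · simp only [Matrix.vecMulVec_apply, ← sum_mul, hh.2, one_mul]

lemma isClosed_couplings (h : Fin n → ℝ) (g : Fin m → ℝ) : IsClosed (Couplings h g) := by
  simp only [Couplings, Set.ofPred_and, Set.ofPred_forall]
  refine .inter ?_ (.inter ?_ ?_)
  · exact isClosed_iInter fun i ↦ isClosed_iInter fun j ↦ isClosed_le (by fun_prop) (by fun_prop)
  · exact isClosed_iInter fun i ↦ isClosed_eq (by fun_prop) (by fun_prop)
  · exact isClosed_iInter fun j ↦ isClosed_eq (by fun_prop) (by fun_prop)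

lemma isCompact_couplings (h : Fin n → ℝ) (g : Fin m → ℝ) : IsCompact (Couplings h g) := by
  have hbox : IsCompact
      (Set.univ.pi fun i ↦ Set.univ.pi fun _ : Fin m ↦ Set.Icc 0 (h i)) :=
    isCompact_univ_pi fun i ↦ isCompact_univ_pi fun _ ↦ isCompact_Icc
  refine hbox.of_isClosed_subset (isClosed_couplings h g) ?_
  rintro π ⟨hπ, hrow, -⟩ i - j -
  exact ⟨hπ i j, hrow i ▸ single_le_sum (fun j _ ↦ hπ i j) (mem_univ j)⟩

lemma biTotal_ne_zero_of_mem_couplings (hπ : π ∈ Couplings h g) (hh : ∀ i, h i ≠ 0)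
    (hg : ∀ j, g j ≠ 0) : Relator.BiTotal fun i j ↦ π i j ≠ 0 := by
  obtain ⟨-, hrow, hcol⟩ := hπ
  refine ⟨fun i ↦ ?_, fun j ↦ ?_⟩
  · obtain ⟨j, -, hij⟩ := exists_ne_zero_of_sum_ne_zero ((hrow i).trans_ne (hh i))
    exact ⟨j, hij⟩
  · obtain ⟨i, -, hij⟩ := exists_ne_zero_of_sum_ne_zero ((hcol j).trans_ne (hg j))
    exact ⟨i, hij⟩

lemma weight_eq_of_support_subset_graph (hπ : π ∈ Couplings h g) (σ : Fin n ≃ Fin m)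
    (hσ : ∀ i j, π i j ≠ 0 → σ i = j) (i : Fin n) : h i = g (σ i) := by
  obtain ⟨-, hrow, hcol⟩ := hπ
  calc
    h i = ∑ j, π i j := (hrow i).symm
    _ = π i (σ i) := Fintype.sum_eq_single _ fun j hj ↦ not_not.1 (mt (hσ i j) hj.symm)
    _ = ∑ k, π k (σ i) := (Fintype.sum_eq_single _ fun k hk ↦
        not_not.1 (mt (hσ k (σ i)) (σ.injective.ne hk))).symm
    _ = g (σ i) := hcol (σ i)

end Couplings

lemma sum_sum_eq_zero_iff_of_nonneg {ι κ N : Type*} [Fintype ι] [Fintype κ] [AddCommMonoid N]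
    [PartialOrder N] [IsOrderedAddMonoid N] {f : ι → κ → N} (hf : ∀ i j, 0 ≤ f i j) :
    ∑ i, ∑ j, f i j = 0 ↔ ∀ i j, f i j = 0 := by
  rw [← Fintype.sum_prod_type', sum_eq_zero_iff_of_nonneg fun p _ ↦ hf p.1 p.2]
  simp only [mem_univ, true_imp_iff, Prod.forall]

section Losses

variable {n m : ℕ} {q α : ℝ} {M π : Matrix (Fin n) (Fin m) ℝ}
  {C₁ : Matrix (Fin n) (Fin n) ℝ} {C₂ : Matrix (Fin m) (Fin m) ℝ}

lemma continuous_Eloss (q α : ℝ) (M : Matrix (Fin n) (Fin m) ℝ) (C₁ : Matrix (Fin n) (Fin n) ℝ)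
    (C₂ : Matrix (Fin m) (Fin m) ℝ) : Continuous (Eloss q α M C₁ C₂) := by
  unfold Eloss Hloss Jloss
  fun_prop

lemma exists_mem_couplings_Eloss_eq_sInf {h : Fin n → ℝ} {g : Fin m → ℝ}
    (hne : (Couplings h g).Nonempty) (q α : ℝ) (M : Matrix (Fin n) (Fin m) ℝ)
    (C₁ : Matrix (Fin n) (Fin n) ℝ) (C₂ : Matrix (Fin m) (Fin m) ℝ) :
    ∃ π ∈ Couplings h g, Eloss q α M C₁ C₂ π = sInf (Eloss q α M C₁ C₂ '' Couplings h g) :=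
  ((isCompact_couplings h g).image (continuous_Eloss q α M C₁ C₂)).sInf_mem (hne.image _)

lemma Hloss_nonneg (hM : ∀ i j, 0 ≤ M i j) (hπ : ∀ i j, 0 ≤ π i j) : 0 ≤ Hloss q M π :=
  sum_nonneg fun i _ ↦ sum_nonneg fun j _ ↦ mul_nonneg (Real.rpow_nonneg (hM i j) q) (hπ i j)

lemma Jloss_term_nonneg (hπ : ∀ i j, 0 ≤ π i j) (i k : Fin n) (j l : Fin m) :
    0 ≤ |C₁ i k - C₂ j l| ^ q * π i j * π k l :=
  mul_nonneg (mul_nonneg (Real.rpow_nonneg (abs_nonneg _) q) (hπ i j)) (hπ k l)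

lemma Jloss_nonneg (hπ : ∀ i j, 0 ≤ π i j) : 0 ≤ Jloss q C₁ C₂ π :=
  sum_nonneg fun i _ ↦ sum_nonneg fun j _ ↦ sum_nonneg fun k _ ↦ sum_nonneg fun l _ ↦
    Jloss_term_nonneg hπ i k j l

lemma Hloss_eq_zero_iff (hq : q ≠ 0) (hM : ∀ i j, 0 ≤ M i j) (hπ : ∀ i j, 0 ≤ π i j) :
    Hloss q M π = 0 ↔ ∀ i j, π i j ≠ 0 → M i j = 0 := by
  rw [Hloss, sum_sum_eq_zero_iff_of_nonneg fun i j ↦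
    mul_nonneg (Real.rpow_nonneg (hM i j) q) (hπ i j)]
  simp only [mul_eq_zero, Real.rpow_eq_zero (hM _ _) hq, or_iff_not_imp_right, ne_eq]

lemma Jloss_eq_zero_iff (hq : q ≠ 0) (hπ : ∀ i j, 0 ≤ π i j) :
    Jloss q C₁ C₂ π = 0 ↔ ∀ i j k l, π i j ≠ 0 → π k l ≠ 0 → C₁ i k = C₂ j l := by
  have hterm := Jloss_term_nonneg (q := q) (C₁ := C₁) (C₂ := C₂) hπ
  rw [Jloss, sum_sum_eq_zero_iff_of_nonneg fun i j ↦
    sum_nonneg fun k _ ↦ sum_nonneg fun l _ ↦ hterm i k j l]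
  refine forall₂_congr fun i j ↦ ?_
  rw [sum_sum_eq_zero_iff_of_nonneg fun k l ↦ hterm i k j l]
  refine forall₂_congr fun k l ↦ ?_
  rw [mul_eq_zero, mul_eq_zero, Real.rpow_eq_zero (abs_nonneg _) hq, abs_eq_zero, sub_eq_zero]
  tauto

lemma Eloss_eq_zero_iff (hα : α ∈ Set.Ioo (0 : ℝ) 1) (hM : ∀ i j, 0 ≤ M i j)
    (hπ : ∀ i j, 0 ≤ π i j) :
    Eloss q α M C₁ C₂ π = 0 ↔ Hloss q M π = 0 ∧ Jloss q C₁ C₂ π = 0 := by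
  have hα' : 0 < 1 - α := sub_pos.2 hα.2
  rw [Eloss, add_eq_zero_iff_of_nonneg (mul_nonneg hα'.le (Hloss_nonneg hM hπ))
    (mul_nonneg hα.1.le (Jloss_nonneg hπ)), mul_eq_zero_iff_left hα'.ne',
    mul_eq_zero_iff_left hα.1.ne']

lemma preservesStructure_of_Eloss_eq_zero {Ω : Type*} [MetricSpace Ω] {a : Fin n → Ω}
    {b : Fin m → Ω} (hq : q ≠ 0) (hα : α ∈ Set.Ioo (0 : ℝ) 1) (hπ : ∀ i j, 0 ≤ π i j)
    (hE : Eloss q α (fun i j ↦ dist (a i) (b j)) C₁ C₂ π = 0) :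
    PreservesStructure C₁ C₂ a b fun i j ↦ π i j ≠ 0 := by
  have hM (i j) : 0 ≤ dist (a i) (b j) := dist_nonneg
  obtain ⟨hH, hJ⟩ := (Eloss_eq_zero_iff hα hM hπ).1 hE
  exact ⟨fun hij ↦ dist_eq_zero.1 ((Hloss_eq_zero_iff hq hM hπ).1 hH _ _ hij),
    (Jloss_eq_zero_iff hq hπ).1 hJ _ _ _ _⟩

end Losses

theorem fgw_eq_zero_implies_isomorphism_general {Ω : Type*} [MetricSpace Ω] {n m : ℕ} {q α : ℝ}
    (hq : 0 < q) (hα : α ∈ Set.Ioo (0 : ℝ) 1) {h : Fin n → ℝ} {g : Fin m → ℝ}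
    (hh : IsSimplex h) (hg : IsSimplex g) {a : Fin n → Ω} {b : Fin m → Ω}
    {C₁ : Matrix (Fin n) (Fin n) ℝ} {C₂ : Matrix (Fin m) (Fin m) ℝ}
    (hinj₁ : Function.Injective fun i ↦ (C₁ i, a i))
    (hinj₂ : Function.Injective fun j ↦ (C₂ j, b j))
    (hzero : sInf (Eloss q α (fun i j ↦ dist (a i) (b j)) C₁ C₂ '' Couplings h g) = 0) :
    n = m ∧ ∃ σ : Fin n ≃ Fin m,
      (∀ i, h i = g (σ i)) ∧ (∀ i, a i = b (σ i)) ∧ (∀ i k, C₁ i k = C₂ (σ i) (σ k)) := by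
  obtain ⟨π, hπ, hmin⟩ := exists_mem_couplings_Eloss_eq_sInf
    ⟨_, vecMulVec_mem_couplings hh.mem_stdSimplex hg.mem_stdSimplex⟩ q α
    (fun i j ↦ dist (a i) (b j)) C₁ C₂
  have hpres : PreservesStructure C₁ C₂ a b fun i j ↦ π i j ≠ 0 :=
    preservesStructure_of_Eloss_eq_zero hq.ne' hα hπ.1 (hmin.trans hzero)
  have htotal := biTotal_ne_zero_of_mem_couplings hπ (fun i ↦ (hh.1 i).ne') fun j ↦ (hg.1 j).ne'
  obtain ⟨σ, hσ⟩ :=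
    exists_equiv_of_biTotal_of_biUnique htotal (hpres.biUnique htotal hinj₁ hinj₂)
  have hgraph (i) : π i (σ i) ≠ 0 := (hσ i (σ i)).2 rfl
  exact ⟨Fin.equiv_iff_eq.1 ⟨σ⟩, σ,
    weight_eq_of_support_subset_graph hπ σ fun i j ↦ (hσ i j).1,
    fun i ↦ hpres.feature_eq (hgraph i), fun i k ↦ hpres.structure_eq (hgraph i) (hgraph k)⟩

/-- vanishing of FGW: necessity: if the FGW value is zero,
the two structured data are isomorphic via a weight-, feature- and
structure-preserving bijection (in particular `n = m`). -/
theorem fgw_eq_zero_implies_isomorphism {Ωf : Type*} [MetricSpace Ωf] {n m : ℕ}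
    (q α : ℝ) (hq : 1 ≤ q) (hα : α ∈ Set.Ioo (0 : ℝ) 1)
    (h : Fin n → ℝ) (g : Fin m → ℝ) (hh : IsSimplex h) (hg : IsSimplex g)
    (a : Fin n → Ωf) (b : Fin m → Ωf)
    (C1 : Matrix (Fin n) (Fin n) ℝ) (C2 : Matrix (Fin m) (Fin m) ℝ)
    -- `C₁` is a (symmetric) distance matrix
    (hC1sym : ∀ i k, C1 i k = C1 k i)
    (hC1nonneg : ∀ i k, 0 ≤ C1 i k)
    (hC1diag : ∀ i, C1 i i = 0)
    (hC1tri : ∀ i k l, C1 i k ≤ C1 i l + C1 l k)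
    -- `C₂` is a (symmetric) distance matrix
    (hC2sym : ∀ j l, C2 j l = C2 l j)
    (hC2nonneg : ∀ j l, 0 ≤ C2 j l)
    (hC2diag : ∀ j, C2 j j = 0)
    (hC2tri : ∀ j l p, C2 j l ≤ C2 j p + C2 p l)
    -- the support points are pairwise distinct in the product sense
    (hdist1 : ∀ i j, i ≠ j → ¬ ((∀ k, C1 i k = C1 j k) ∧ a i = a j))
    (hdist2 : ∀ i j, i ≠ j → ¬ ((∀ l, C2 i l = C2 j l) ∧ b i = b j))
    (hzero : sInf (Eloss q α (fun i j => dist (a i) (b j)) C1 C2 '' Couplings h g) = 0) :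
    n = m ∧ ∃ σ : Fin n ≃ Fin m,
      (∀ i, h i = g (σ i)) ∧
      (∀ i, a i = b (σ i)) ∧
      (∀ i k, C1 i k = C2 (σ i) (σ k)) :=
  fgw_eq_zero_implies_isomorphism_general (zero_lt_one.trans_le hq) hα hh hg
    (injective_prodMk_of_forall_ne hdist1) (injective_prodMk_of_forall_ne hdist2) hzero
end

section
/- (Triangle inequality for q = 1.) Let (Ω_f, d) be a metric space and α ∈ [0,1]. Let h ∈ Σ_n, g ∈ Σ_m, f ∈ Σ_k be positive histograms with associated features a₁,…,a_n, b₁,…,b_m, c₁,…,c_k ∈ Ω_f and matrices C₁ ∈ ℝ^{n×n}, C₂ ∈ ℝ^{m×m}, C₃ ∈ ℝ^{k×k}. Write FGW(μ,ν) = min_{π ∈ Π(h,g)} Σ_{i,j,k',l} ((1−α)·d(a_i,b_j) + α·|C₁(i,k')−C₂(j,l)|)·π_{ij}·π_{k'l}, and define FGW(ν,γ) and FGW(μ,γ) analogously with the corresponding features, structure matrices and histograms. Then FGW(μ,γ) ≤ FGW(μ,ν) + FGW(ν,γ). -/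
open Finset

/-- The FGW value (for `q = 1`) between two structured data given by features,
structure matrices and histograms. -/
noncomputable def FGW1 {Ωf : Type*} [MetricSpace Ωf] (α : ℝ) {n m : ℕ}
    (a : Fin n → Ωf) (b : Fin m → Ωf)
    (C1 : Matrix (Fin n) (Fin n) ℝ) (C2 : Matrix (Fin m) (Fin m) ℝ)
    (h : Fin n → ℝ) (g : Fin m → ℝ) : ℝ :=
  sInf ((fun π : Matrix (Fin n) (Fin m) ℝ =>
    ∑ i, ∑ j, ∑ k', ∑ l,
      ((1 - α) * dist (a i) (b j) + α * |C1 i k' - C2 j l|) * π i j * π k' l) ''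
    Couplings h g)

/-!
The cost of a coupling is quadratic in the coupling, and its kernel `L i j i' j'` satisfies the
triangle inequality between the pairs `(i, i')` and `(j, j')`. A coupling `P` of `h` and `g` and a
coupling `Q` of `g` and `f` are the two-dimensional marginals of the weight `P i j * Q j k / g j`
on triples, whose remaining marginal is a coupling of `h` and `f`. All three costs then become
double sums over triples against the same nonnegative weight, so the kernels can be compared term
by term.
-/

section JointLaw

variable {Ω ι κ τ : Type*} [Fintype Ω] [Fintype ι] [Fintype κ] [Fintype τ]

/-- The quadratic transport cost of `π` for the kernel `L`; the cost minimised in `FGW1` is the case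
`L = fgwKernel α a b C1 C2`. -/
def quadraticCost (L : ι → κ → ι → κ → ℝ) (π : Matrix ι κ ℝ) : ℝ :=
  ∑ i, ∑ j, ∑ i', ∑ j', L i j i' j' * π i j * π i' j'

/-- `π` is the joint law of `p` and `q` under the weight `W`, that is, the pushforward of `W` along
`ω ↦ (p ω, q ω)`. It is encoded by duality, as the change of variables formula for every test
function `φ`. -/
def IsJointLaw (W : Ω → ℝ) (p : Ω → ι) (q : Ω → κ) (π : Matrix ι κ ℝ) : Prop :=
  ∀ φ : ι → κ → ℝ, ∑ i, ∑ j, φ i j * π i j = ∑ ω, φ (p ω) (q ω) * W ω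

lemma quadraticCost_eq_sum_mul (L : ι → κ → ι → κ → ℝ) (π : Matrix ι κ ℝ) :
    quadraticCost L π = ∑ i, ∑ j, (∑ i', ∑ j', L i j i' j' * π i' j') * π i j := by
  simp only [quadraticCost, sum_mul, mul_right_comm]

lemma IsJointLaw.quadraticCost_eq {W : Ω → ℝ} {p : Ω → ι} {q : Ω → κ} {π : Matrix ι κ ℝ}
    (hπ : IsJointLaw W p q π) (L : ι → κ → ι → κ → ℝ) :
    quadraticCost L π = ∑ ω, (∑ ω', L (p ω) (q ω) (p ω') (q ω') * W ω') * W ω := by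
  rw [quadraticCost_eq_sum_mul, hπ fun i j => ∑ i', ∑ j', L i j i' j' * π i' j']
  simp only [hπ (L _ _)]

lemma quadraticCost_le_add_of_isJointLaw {W : Ω → ℝ} {p : Ω → ι} {q : Ω → κ} {r : Ω → τ}
    {P : Matrix ι κ ℝ} {Q : Matrix κ τ ℝ} {S : Matrix ι τ ℝ} (hW : ∀ ω, 0 ≤ W ω)
    (hP : IsJointLaw W p q P) (hQ : IsJointLaw W q r Q) (hS : IsJointLaw W p r S)
    {L₁₂ : ι → κ → ι → κ → ℝ} {L₂₃ : κ → τ → κ → τ → ℝ} {L₁₃ : ι → τ → ι → τ → ℝ}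
    (hL : ∀ i j k i' j' k', L₁₃ i k i' k' ≤ L₁₂ i j i' j' + L₂₃ j k j' k') :
    quadraticCost L₁₃ S ≤ quadraticCost L₁₂ P + quadraticCost L₂₃ Q := by
  rw [hP.quadraticCost_eq, hQ.quadraticCost_eq, hS.quadraticCost_eq]
  simp only [← sum_add_distrib, ← add_mul]
  gcongr with ω _ ω' _
  · exact hW ω
  · exact hW ω'
  · exact hL ..

lemma isJointLaw_left_mid {W : ι × κ × τ → ℝ} {π : Matrix ι κ ℝ}
    (hπ : ∀ i j, ∑ k, W (i, j, k) = π i j) :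
    IsJointLaw W (fun ω => ω.1) (fun ω => ω.2.1) π := fun φ => by
  simp only [← hπ, mul_sum, Fintype.sum_prod_type]

lemma isJointLaw_mid_right {W : ι × κ × τ → ℝ} {π : Matrix κ τ ℝ}
    (hπ : ∀ j k, ∑ i, W (i, j, k) = π j k) :
    IsJointLaw W (fun ω => ω.2.1) (fun ω => ω.2.2) π := fun φ => by
  simp only [← hπ, mul_sum, Fintype.sum_prod_type]
  exact sum_comm_cycle

lemma isJointLaw_left_right {W : ι × κ × τ → ℝ} {π : Matrix ι τ ℝ}
    (hπ : ∀ i k, ∑ j, W (i, j, k) = π i k) :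
    IsJointLaw W (fun ω => ω.1) (fun ω => ω.2.2) π := fun φ => by
  simp only [← hπ, mul_sum, Fintype.sum_prod_type]
  exact sum_congr rfl fun _ _ => sum_comm

end JointLaw

section Gluing

variable {ι κ τ : Type*}

/-- The weight on triples that glues a coupling `P` of `h` and `g` to a coupling `Q` of `g` and `f`
along `g`, making the outer coordinates conditionally independent given the middle one. Where
`g j = 0`, both `P i j` and `Q j k` vanish and the division by zero gives the right value `0`. -/
noncomputable def gluing (P : Matrix ι κ ℝ) (g : κ → ℝ) (Q : Matrix κ τ ℝ) : ι × κ × τ → ℝ :=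
  fun ω => P ω.1 ω.2.1 * Q ω.2.1 ω.2.2 / g ω.2.1

lemma sum_gluing_right [Fintype τ] {P : Matrix ι κ ℝ} {g : κ → ℝ} {Q : Matrix κ τ ℝ} {i : ι} {j : κ}
    (hP : g j = 0 → P i j = 0) (hQ : ∑ k, Q j k = g j) :
    ∑ k, gluing P g Q (i, j, k) = P i j := by
  simp only [gluing]
  rw [← sum_div, ← mul_sum, hQ, mul_div_cancel_of_imp hP]

lemma sum_gluing_left [Fintype ι] {P : Matrix ι κ ℝ} {g : κ → ℝ} {Q : Matrix κ τ ℝ} {j : κ} {k : τ}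
    (hP : ∑ i, P i j = g j) (hQ : g j = 0 → Q j k = 0) :
    ∑ i, gluing P g Q (i, j, k) = Q j k := by
  simp only [gluing]
  rw [← sum_div, ← sum_mul, hP, mul_div_cancel_left_of_imp hQ]

end Gluing

section Kernel

variable {Ωf ι κ τ : Type*} [PseudoMetricSpace Ωf]

/-- The kernel of the FGW cost for `q = 1`: the distance of features mixed with the distortion of
the structure matrices. -/
def fgwKernel (α : ℝ) (a : ι → Ωf) (b : κ → Ωf) (C1 : Matrix ι ι ℝ) (C2 : Matrix κ κ ℝ) :
    ι → κ → ι → κ → ℝ :=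
  fun i j i' j' => (1 - α) * dist (a i) (b j) + α * |C1 i i' - C2 j j'|

lemma fgwKernel_triangle {α : ℝ} (hα : α ∈ Set.Icc (0 : ℝ) 1)
    (a : ι → Ωf) (b : κ → Ωf) (c : τ → Ωf)
    (C1 : Matrix ι ι ℝ) (C2 : Matrix κ κ ℝ) (C3 : Matrix τ τ ℝ) (i : ι) (j : κ) (k : τ)
    (i' : ι) (j' : κ) (k' : τ) :
    fgwKernel α a c C1 C3 i k i' k' ≤
      fgwKernel α a b C1 C2 i j i' j' + fgwKernel α b c C2 C3 j k j' k' := by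
  have feature_le := mul_le_mul_of_nonneg_left (dist_triangle (a i) (b j) (c k))
    (sub_nonneg.2 hα.2)
  have structure_le := mul_le_mul_of_nonneg_left (abs_sub_le (C1 i i') (C2 j j') (C3 k k')) hα.1
  unfold fgwKernel
  linarith

end Kernel

section Couplings

variable {n m k : ℕ} {h : Fin n → ℝ} {g : Fin m → ℝ} {f : Fin k → ℝ}

lemma vecMulVec_mem_couplings_s10 (hh₀ : ∀ i, 0 ≤ h i) (hh₁ : ∑ i, h i = 1)
    (hg₀ : ∀ j, 0 ≤ g j) (hg₁ : ∑ j, g j = 1) : Matrix.vecMulVec h g ∈ Couplings h g := by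
  refine ⟨fun i j => mul_nonneg (hh₀ i) (hg₀ j), fun i => ?_, fun j => ?_⟩
  · simp only [Matrix.vecMulVec_apply, ← mul_sum, hg₁, mul_one]
  · simp only [Matrix.vecMulVec_apply, ← sum_mul, hh₁, one_mul]

lemma IsSimplex.couplings_nonempty (hh : IsSimplex h) (hg : IsSimplex g) :
    (Couplings h g).Nonempty :=
  ⟨_, vecMulVec_mem_couplings_s10 (fun i => (hh.1 i).le) hh.2 (fun j => (hg.1 j).le) hg.2⟩

lemma Couplings.le_left {π : Matrix (Fin n) (Fin m) ℝ} (hπ : π ∈ Couplings h g)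
    (i : Fin n) (j : Fin m) : π i j ≤ h i :=
  hπ.2.1 i ▸ single_le_sum (fun j' _ => hπ.1 i j') (mem_univ j)

lemma Couplings.le_right {π : Matrix (Fin n) (Fin m) ℝ} (hπ : π ∈ Couplings h g)
    (i : Fin n) (j : Fin m) : π i j ≤ g j :=
  hπ.2.2 j ▸ single_le_sum (fun i' _ => hπ.1 i' j) (mem_univ i)

lemma bddBelow_quadraticCost_image_couplings (L : Fin n → Fin m → Fin n → Fin m → ℝ)
    (h : Fin n → ℝ) (g : Fin m → ℝ) : BddBelow (quadraticCost L '' Couplings h g) := by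
  let box : Set (Fin n → Fin m → ℝ) := Set.Icc 0 fun i _ => h i
  have couplings_subset_box : Couplings h g ⊆ box := fun π hπ =>
    ⟨hπ.1, fun i j => Couplings.le_left hπ i j⟩
  have continuous_cost : Continuous fun π : Fin n → Fin m → ℝ => quadraticCost L π := by
    unfold quadraticCost
    fun_prop
  exact (isCompact_Icc.bddBelow_image continuous_cost.continuousOn).mono
    (Set.image_mono couplings_subset_box)

lemma Couplings.exists_gluing {P : Matrix (Fin n) (Fin m) ℝ} {Q : Matrix (Fin m) (Fin k) ℝ}
    (hP : P ∈ Couplings h g) (hQ : Q ∈ Couplings g f) :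
    ∃ W : Fin n × Fin m × Fin k → ℝ, (∀ ω, 0 ≤ W ω) ∧
      (∀ i j, ∑ l, W (i, j, l) = P i j) ∧ ∀ j l, ∑ i, W (i, j, l) = Q j l := by
  have g_nonneg (j : Fin m) : 0 ≤ g j := hP.2.2 j ▸ sum_nonneg fun i _ => hP.1 i j
  refine ⟨gluing P g Q, fun ω => ?_, fun i j => ?_, fun j l => ?_⟩
  · exact div_nonneg (mul_nonneg (hP.1 _ _) (hQ.1 _ _)) (g_nonneg _)
  · exact sum_gluing_right
      (fun hgj => le_antisymm (hgj ▸ Couplings.le_right hP i j) (hP.1 i j)) (hQ.2.1 j)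
  · exact sum_gluing_left (hP.2.2 j)
      (fun hgj => le_antisymm (hgj ▸ Couplings.le_left hQ j l) (hQ.1 j l))

lemma sum_mid_mem_couplings {P : Matrix (Fin n) (Fin m) ℝ} {Q : Matrix (Fin m) (Fin k) ℝ}
    (hP : P ∈ Couplings h g) (hQ : Q ∈ Couplings g f) {W : Fin n × Fin m × Fin k → ℝ}
    (hW : ∀ ω, 0 ≤ W ω) (hWP : ∀ i j, ∑ l, W (i, j, l) = P i j)
    (hWQ : ∀ j l, ∑ i, W (i, j, l) = Q j l) :
    Matrix.of (fun i l => ∑ j, W (i, j, l)) ∈ Couplings h f := by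
  refine ⟨fun i l => ?_, fun i => ?_, fun l => ?_⟩ <;> simp only [Matrix.of_apply]
  · exact sum_nonneg fun j _ => hW _
  · rw [sum_comm]
    simp only [hWP, hP.2.1]
  · rw [sum_comm]
    simp only [hWQ, hQ.2.2]

lemma Couplings.exists_quadraticCost_le_add {L₁₂ : Fin n → Fin m → Fin n → Fin m → ℝ}
    {L₂₃ : Fin m → Fin k → Fin m → Fin k → ℝ} {L₁₃ : Fin n → Fin k → Fin n → Fin k → ℝ}
    (hL : ∀ i j l i' j' l', L₁₃ i l i' l' ≤ L₁₂ i j i' j' + L₂₃ j l j' l')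
    {P : Matrix (Fin n) (Fin m) ℝ} {Q : Matrix (Fin m) (Fin k) ℝ}
    (hP : P ∈ Couplings h g) (hQ : Q ∈ Couplings g f) :
    ∃ S ∈ Couplings h f, quadraticCost L₁₃ S ≤ quadraticCost L₁₂ P + quadraticCost L₂₃ Q := by
  obtain ⟨W, hW, hWP, hWQ⟩ := Couplings.exists_gluing hP hQ
  exact ⟨_, sum_mid_mem_couplings hP hQ hW hWP hWQ,
    quadraticCost_le_add_of_isJointLaw hW (isJointLaw_left_mid hWP) (isJointLaw_mid_right hWQ)
      (isJointLaw_left_right fun _ _ => rfl) hL⟩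

open scoped Pointwise in
theorem fgw_triangle_inequality_general {L₁₂ : Fin n → Fin m → Fin n → Fin m → ℝ}
    {L₂₃ : Fin m → Fin k → Fin m → Fin k → ℝ} {L₁₃ : Fin n → Fin k → Fin n → Fin k → ℝ}
    (hL : ∀ i j l i' j' l', L₁₃ i l i' l' ≤ L₁₂ i j i' j' + L₂₃ j l j' l')
    (hhg : (Couplings h g).Nonempty) (hgf : (Couplings g f).Nonempty) :
    sInf (quadraticCost L₁₃ '' Couplings h f) ≤
      sInf (quadraticCost L₁₂ '' Couplings h g) + sInf (quadraticCost L₂₃ '' Couplings g f) := by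
  rw [← csInf_add (hhg.image _) (bddBelow_quadraticCost_image_couplings ..)
    (hgf.image _) (bddBelow_quadraticCost_image_couplings ..)]
  refine le_csInf ((hhg.image _).add (hgf.image _)) ?_
  rintro _ ⟨_, ⟨P, hP, rfl⟩, _, ⟨Q, hQ, rfl⟩, rfl⟩
  obtain ⟨S, hS, cost_le⟩ := Couplings.exists_quadraticCost_le_add hL hP hQ
  exact (csInf_le (bddBelow_quadraticCost_image_couplings ..) ⟨S, hS, rfl⟩).trans cost_le

end Couplings

/-- triangle inequality for `q = 1`:
`FGW(μ,γ) ≤ FGW(μ,ν) + FGW(ν,γ)`. -/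
theorem fgw_triangle_inequality {Ωf : Type*} [MetricSpace Ωf] {n m k : ℕ}
    (α : ℝ) (hα : α ∈ Set.Icc (0 : ℝ) 1)
    (h : Fin n → ℝ) (g : Fin m → ℝ) (f : Fin k → ℝ)
    (hh : IsSimplex h) (hg : IsSimplex g) (hf : IsSimplex f)
    (a : Fin n → Ωf) (b : Fin m → Ωf) (c : Fin k → Ωf)
    (C1 : Matrix (Fin n) (Fin n) ℝ) (C2 : Matrix (Fin m) (Fin m) ℝ)
    (C3 : Matrix (Fin k) (Fin k) ℝ) :
    FGW1 α a c C1 C3 h f ≤ FGW1 α a b C1 C2 h g + FGW1 α b c C2 C3 g f :=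
  fgw_triangle_inequality_general (fgwKernel_triangle hα a b c C1 C2 C3)
    (hh.couplings_nonempty hg) (hg.couplings_nonempty hf)
end
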